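/- arXiv:hep-th/0602165 — 5 statements merged into one kernel-verified Lean document; each statement's English description precedes it below -/
import Mathlib

section
/- For all complex numbers s₁, s₂ with 3s₁ ≠ s₂ and s₁ ≠ 2s₂, the Horn parametrization lands on the discriminant: Δ₀( −s₁²·(s₁−2s₂)/(3s₁−s₂)³ , −s₂·(3s₁−s₂)/(s₁−2s₂)² ) = 0. -/
/-- The primary discriminant of the moduli space of complexified Kähler forms of the
`ℂ³/ℤ₅` model. -/
noncomputable def Δ₀ (x₁ x₂ : ℂ) : ℂ :=
  3125 * x₁ ^ 2 * x₂ ^ 3 + 500 * x₁ * x₂ ^ 2 - 225 * x₁ * x₂ + 16 * x₂ ^ 2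
    + 27 * x₁ - 8 * x₂ + 1

/-!
Lattice points with relations `Q = [[1,0,1,−3,1],[0,1,0,1,−2]]` are
`(1,0), (0,2), (−1,−1), (0,0), (0,1)`, so the mirror curve is
`z + x₂w² + x₁/(zw) + 1 + w = 0`. It is singular at a point of the torus exactly when the vector of
its five monomials is annihilated by the lattice points and has sum zero, i.e. is proportional to
`sQ = (s₁, s₂, s₁, s₂ − 3s₁, s₁ − 2s₂)` for some `s`; normalizing the constant monomial to `1`
and reading off `x₁, x₂` gives the Horn parametrization. Conversely, the singularity equations force
`w = −(5z + 2)`, `x₁ = z²w` and `x₂w² = 3z + 1`, and `Δ₀` vanishes identically on the curve so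
parametrized by `z`.
-/

/-- The primary discriminant over an arbitrary commutative ring, for which the elimination argument
is carried out; it unfolds to `Δ₀` over `ℂ`. -/
def primaryDiscriminant {R : Type*} [CommRing R] (x₁ x₂ : R) : R :=
  3125 * x₁ ^ 2 * x₂ ^ 3 + 500 * x₁ * x₂ ^ 2 - 225 * x₁ * x₂ + 16 * x₂ ^ 2
    + 27 * x₁ - 8 * x₂ + 1

/-- A singular point of the mirror curve `z + x₂w² + x₁/(zw) + 1 + w = 0`, expressed through the
logarithmic derivatives `z∂_z` and `w∂_w`. The monomial `x₁/(zw)` is a separate coordinate `u`, so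
that the degenerate case `x₁ = z = u = 0` is included. -/
structure IsLogSingularPoint {R : Type*} [CommRing R] (x₁ x₂ z u w : R) : Prop where
  monomial : z * u * w = x₁
  curve : z + u + 1 + w + x₂ * w ^ 2 = 0
  dlog_z : z - u = 0
  dlog_w : -u + w + 2 * (x₂ * w ^ 2) = 0

namespace IsLogSingularPoint

variable {R : Type*} [CommRing R] {x₁ x₂ z u w : R}

theorem w_eq (h : IsLogSingularPoint x₁ x₂ z u w) : w = -(5 * z + 2) := by
  linear_combination 2 * h.curve - h.dlog_w + 3 * h.dlog_z

theorem x₁_eq (h : IsLogSingularPoint x₁ x₂ z u w) : x₁ = z ^ 2 * w := by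
  linear_combination -h.monomial - z * w * h.dlog_z

theorem x₂_mul_w_sq (h : IsLogSingularPoint x₁ x₂ z u w) : x₂ * w ^ 2 = 3 * z + 1 := by
  linear_combination h.curve + h.dlog_z - h.w_eq

theorem isUnit_w (h : IsLogSingularPoint x₁ x₂ z u w) : IsUnit w := by
  have hinv : w * -(5 * x₂ * w + 3) = 1 := by
    linear_combination -5 * h.x₂_mul_w_sq - 3 * h.w_eq
  exact IsUnit.of_mul_eq_one _ hinv

theorem primaryDiscriminant_eq_zero (h : IsLogSingularPoint x₁ x₂ z u w) :
    primaryDiscriminant x₁ x₂ = 0 := by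
  have hmul : w ^ 4 * primaryDiscriminant x₁ x₂ = 0 := calc
    w ^ 4 * primaryDiscriminant x₁ x₂
      = 3125 * z ^ 4 * (x₂ * w ^ 2) ^ 3 + 500 * z ^ 2 * w * (x₂ * w ^ 2) ^ 2
          - 225 * z ^ 2 * w ^ 3 * (x₂ * w ^ 2) + 16 * (x₂ * w ^ 2) ^ 2
          + 27 * z ^ 2 * w ^ 5 - 8 * w ^ 2 * (x₂ * w ^ 2) + w ^ 4 := by
        rw [primaryDiscriminant, h.x₁_eq]
        ring
    _ = 0 := by
        rw [h.x₂_mul_w_sq, h.w_eq]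
        ring
  exact (h.isUnit_w.pow 4).mul_right_eq_zero.mp hmul

end IsLogSingularPoint

section Field

variable {K : Type*} [Field K]

theorem isLogSingularPoint_of_monomials {a₁ a₂ a₃ a₄ a₅ : K} (ha₄ : a₄ ≠ 0) (ha₅ : a₅ ≠ 0)
    (hsum : a₁ + a₂ + a₃ + a₄ + a₅ = 0) (hz : a₁ - a₃ = 0) (hw : -a₃ + a₅ + 2 * a₂ = 0) :
    IsLogSingularPoint (a₁ * a₃ * a₅ / a₄ ^ 3) (a₂ * a₄ / a₅ ^ 2) (a₁ / a₄) (a₃ / a₄)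
      (a₅ / a₄) where
  monomial := by field_simp
  curve := by
    field_simp
    linear_combination hsum
  dlog_z := by rw [← sub_div, hz, zero_div]
  dlog_w := by
    field_simp
    linear_combination hw

theorem isLogSingularPoint_horn {s₁ s₂ : K} (h₁ : 3 * s₁ ≠ s₂) (h₂ : s₁ ≠ 2 * s₂) :
    IsLogSingularPoint (-(s₁ ^ 2 * (s₁ - 2 * s₂)) / (3 * s₁ - s₂) ^ 3)
      (-(s₂ * (3 * s₁ - s₂)) / (s₁ - 2 * s₂) ^ 2)
      (s₁ / (s₂ - 3 * s₁)) (s₁ / (s₂ - 3 * s₁)) ((s₁ - 2 * s₂) / (s₂ - 3 * s₁)) := by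
  have ha₄ : s₂ - 3 * s₁ ≠ 0 := sub_ne_zero.mpr h₁.symm
  have ha₅ : s₁ - 2 * s₂ ≠ 0 := sub_ne_zero.mpr h₂
  have hx₁ : -(s₁ ^ 2 * (s₁ - 2 * s₂)) / (3 * s₁ - s₂) ^ 3
      = s₁ * s₁ * (s₁ - 2 * s₂) / (s₂ - 3 * s₁) ^ 3 := by
    rw [div_eq_div_iff (pow_ne_zero 3 (sub_ne_zero.mpr h₁)) (pow_ne_zero 3 ha₄)]
    ring
  have hx₂ : -(s₂ * (3 * s₁ - s₂)) / (s₁ - 2 * s₂) ^ 2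
      = s₂ * (s₂ - 3 * s₁) / (s₁ - 2 * s₂) ^ 2 := by
    rw [← mul_neg, neg_sub]
  rw [hx₁, hx₂]
  exact isLogSingularPoint_of_monomials ha₄ ha₅ (by ring) (by ring) (by ring)

theorem horn_parametrization_lands_on_discriminant_general (s₁ s₂ : K)
    (h₁ : 3 * s₁ ≠ s₂) (h₂ : s₁ ≠ 2 * s₂) :
    primaryDiscriminant (-(s₁ ^ 2 * (s₁ - 2 * s₂)) / (3 * s₁ - s₂) ^ 3)
      (-(s₂ * (3 * s₁ - s₂)) / (s₁ - 2 * s₂) ^ 2) = 0 :=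
  (isLogSingularPoint_horn h₁ h₂).primaryDiscriminant_eq_zero

end Field

/-- The Horn parametrization associated to the charge matrix
`Q = [[1,0,1,−3,1],[0,1,0,1,−2]]` lands on the discriminant `Δ₀ = 0`. -/
theorem horn_parametrization_lands_on_discriminant (s₁ s₂ : ℂ)
    (h₁ : 3 * s₁ ≠ s₂) (h₂ : s₁ ≠ 2 * s₂) :
    Δ₀ (-(s₁ ^ 2 * (s₁ - 2 * s₂)) / (3 * s₁ - s₂) ^ 3)
       (-(s₂ * (3 * s₁ - s₂)) / (s₁ - 2 * s₂) ^ 2) = 0 :=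
  horn_parametrization_lands_on_discriminant_general s₁ s₂ h₁ h₂
end

section
/- The discriminant curve has exactly two singular points: if (x₁,x₂) ∈ ℂ² satisfies Δ₀(x₁,x₂) = 0, ∂Δ₀/∂x₁(x₁,x₂) = 0 and ∂Δ₀/∂x₂(x₁,x₂) = 0, then (x₁,x₂) = (−1/25, 1/5) or (x₁,x₂) = (−32/675, 9/20). -/
/-!
`Δ₀` is a quadratic polynomial in `x₁` whose coefficients are polynomials in `x₂`, so a common zero
of `Δ₀` and `∂Δ₀/∂x₁` is a double root in `x₁` and forces the discriminant of the quadratic to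
vanish. That discriminant factors as `(5 x₂ - 1) ^ 2 * (9 - 20 x₂) ^ 3`, which leaves two values of
`x₂`; for each of them `∂Δ₀/∂x₁ = 0` is a nondegenerate linear equation for `x₁`.
-/

theorem deriv_quadratic {𝕜 : Type*} [NontriviallyNormedField 𝕜] (a b c x : 𝕜) :
    deriv (fun t => a * (t * t) + b * t + c) x = 2 * a * x + b := by
  have hquad : HasDerivAt (fun t => a * (t * t)) (a * (1 * x + x * 1)) x :=
    ((hasDerivAt_id x).mul (hasDerivAt_id x)).const_mul a
  have hlin : HasDerivAt (fun t => b * t) (b * 1) x := (hasDerivAt_id x).const_mul b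
  rw [((hquad.fun_add hlin).add_const c).deriv]
  ring

theorem discrim_eq_zero_of_double_root {R : Type*} [CommRing R] {a b c x : R}
    (hroot : a * (x * x) + b * x + c = 0) (hderiv : 2 * a * x + b = 0) :
    discrim a b c = 0 := by
  rw [discrim_eq_sq_of_quadratic_eq_zero hroot, hderiv, zero_pow two_ne_zero]

theorem Δ₀_eq_quadratic (x₁ x₂ : ℂ) :
    Δ₀ x₁ x₂ =
      3125 * x₂ ^ 3 * (x₁ * x₁) + (500 * x₂ ^ 2 - 225 * x₂ + 27) * x₁ + (4 * x₂ - 1) ^ 2 := by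
  unfold Δ₀
  ring

theorem deriv_Δ₀_fst (x₁ x₂ : ℂ) :
    deriv (fun t => Δ₀ t x₂) x₁ =
      2 * (3125 * x₂ ^ 3) * x₁ + (500 * x₂ ^ 2 - 225 * x₂ + 27) := by
  simp only [Δ₀_eq_quadratic, deriv_quadratic]

theorem discrim_Δ₀_fst {R : Type*} [CommRing R] (y : R) :
    discrim (3125 * y ^ 3) (500 * y ^ 2 - 225 * y + 27) ((4 * y - 1) ^ 2) =
      (5 * y - 1) ^ 2 * (9 - 20 * y) ^ 3 := by
  unfold discrim
  ring

theorem eq_or_eq_of_discrim_Δ₀_fst_eq_zero {K : Type*} [Field K] [CharZero K] {y : K}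
    (h : discrim (3125 * y ^ 3) (500 * y ^ 2 - 225 * y + 27) ((4 * y - 1) ^ 2) = 0) :
    y = 1 / 5 ∨ y = 9 / 20 := by
  rw [discrim_Δ₀_fst, mul_eq_zero, pow_eq_zero_iff two_ne_zero, pow_eq_zero_iff three_ne_zero] at h
  exact h.imp (fun h5 => by linear_combination h5 / 5) (fun h20 => by linear_combination -h20 / 20)

theorem singular_points_classification_general (x₁ x₂ : ℂ)
    (h₀ : Δ₀ x₁ x₂ = 0) (h₁ : deriv (fun t : ℂ => Δ₀ t x₂) x₁ = 0) :
    (x₁ = -1/25 ∧ x₂ = 1/5) ∨ (x₁ = -32/675 ∧ x₂ = 9/20) := by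
  rw [Δ₀_eq_quadratic] at h₀
  rw [deriv_Δ₀_fst] at h₁
  have hdiscrim := discrim_eq_zero_of_double_root h₀ h₁
  rcases eq_or_eq_of_discrim_Δ₀_fst_eq_zero hdiscrim with rfl | rfl
  · exact Or.inl ⟨by linear_combination h₁ / 50, rfl⟩
  · exact Or.inr ⟨by linear_combination 32 * h₁ / 18225, rfl⟩

/-- The discriminant curve `Δ₀ = 0` has exactly two singular points:
`(−1/25, 1/5)` and `(−32/675, 9/20)`. -/
theorem singular_points_classification (x₁ x₂ : ℂ)
    (h₀ : Δ₀ x₁ x₂ = 0)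
    (h₁ : deriv (fun t : ℂ => Δ₀ t x₂) x₁ = 0)
    (h₂ : deriv (fun t : ℂ => Δ₀ x₁ t) x₂ = 0) :
    (x₁ = -1/25 ∧ x₂ = 1/5) ∨ (x₁ = -32/675 ∧ x₂ = 9/20) :=
  singular_points_classification_general x₁ x₂ h₀ h₁
end

section
/- For all complex numbers s₁, s₂ with s₁ ≠ s₂ and 5s₁ + s₂ ≠ 0, the Horn parametrization in the ℤ₂-phase coordinates lands on the discriminant: Δ̃( −16·s₁⁴·(s₁−s₂)/(5s₁+s₂)⁵ , −4·s₂²/((s₁−s₂)·(5s₁+s₂)) ) = 0. -/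
/-- The discriminant of the `ℂ³/ℤ₅` model rewritten in the coordinates
`(y₁, y₂) = (x₁²x₂, 1/x₂)` of the `ℤ₂` phase. -/
noncomputable def Δtilde (y₁ y₂ : ℂ) : ℂ :=
  (y₂ - 4) ^ 4 + 9765625 * y₁ ^ 2
    + (100000 - 300000 * y₂ + 231250 * y₂ ^ 2 - 77625 * y₂ ^ 3 + 12150 * y₂ ^ 4
        - 729 * y₂ ^ 5) * y₁

/-!
For fixed `y₂` the discriminant is quadratic in `y₁`. The second Horn coordinate
`-4 s₂² / ((s₁ - s₂) (5 s₁ + s₂))` is invariant under the involution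
`[s₁ : s₂] ↦ [4 s₂ - 5 s₁ : 5 s₂]` of the projective line, which exchanges the two linear forms in
its denominator up to scalars. The two roots in `y₁` are the first Horn coordinates of `s` and of
its image under the involution, as comparing their product and sum with the coefficients shows.
-/

section CommRing

variable {R : Type*} [CommRing R]

/-- The coefficient of `y₁` in the discriminant of the `ℤ₂` phase, over any commutative ring. -/
def discrLinearCoeff (y₂ : R) : R :=
  100000 - 300000 * y₂ + 231250 * y₂ ^ 2 - 77625 * y₂ ^ 3 + 12150 * y₂ ^ 4 - 729 * y₂ ^ 5

/-- The discriminant of the `ℤ₂` phase over any commutative ring, as a quadratic in `y₁`;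
over `ℂ` it is `Δtilde`. -/
def discrZ2 (y₁ y₂ : R) : R :=
  (y₂ - 4) ^ 4 + 9765625 * y₁ ^ 2 + discrLinearCoeff y₂ * y₁

/-- The denominator-free equation of the first Horn coordinate: `y` is the first Horn coordinate
of `(s₁, s₂)` when this form vanishes. -/
def hornForm (s₁ s₂ y : R) : R :=
  (5 * s₁ + s₂) ^ 5 * y + 16 * s₁ ^ 4 * (s₁ - s₂)

variable {s₁ s₂ y₂ : R}

theorem denom_pow_four_mul_sub_four_pow_four
    (hy₂ : (s₁ - s₂) * (5 * s₁ + s₂) * y₂ = -(4 * s₂ ^ 2)) :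
    ((s₁ - s₂) * (5 * s₁ + s₂)) ^ 4 * (y₂ - 4) ^ 4 = 256 * s₁ ^ 4 * (4 * s₂ - 5 * s₁) ^ 4 := by
  have hsub : (s₁ - s₂) * (5 * s₁ + s₂) * (y₂ - 4) = 4 * s₁ * (4 * s₂ - 5 * s₁) := by
    linear_combination hy₂
  rw [← mul_pow, hsub]
  ring

theorem denom_pow_five_mul_discrLinearCoeff
    (hy₂ : (s₁ - s₂) * (5 * s₁ + s₂) * y₂ = -(4 * s₂ ^ 2)) :
    ((s₁ - s₂) * (5 * s₁ + s₂)) ^ 5 * discrLinearCoeff y₂ =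
      16 * (9765625 * s₁ ^ 4 * (s₁ - s₂) ^ 6
        + (4 * s₂ - 5 * s₁) ^ 4 * (5 * s₁ + s₂) ^ 6) := by
  have homogenize (m : R) : m ^ 5 * discrLinearCoeff y₂ =
      100000 * m ^ 5 - 300000 * m ^ 4 * (m * y₂) + 231250 * m ^ 3 * (m * y₂) ^ 2
        - 77625 * m ^ 2 * (m * y₂) ^ 3 + 12150 * m * (m * y₂) ^ 4 - 729 * (m * y₂) ^ 5 := by
    unfold discrLinearCoeff
    ring
  rw [homogenize, hy₂]
  ring

theorem denom_pow_five_mul_discrZ2_eq_neg_hornForm_mul (y₁ : R)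
    (hy₂ : (s₁ - s₂) * (5 * s₁ + s₂) * y₂ = -(4 * s₂ ^ 2)) :
    ((s₁ - s₂) * (5 * s₁ + s₂)) ^ 5 * discrZ2 y₁ y₂ =
      -(hornForm s₁ s₂ y₁ * hornForm (4 * s₂ - 5 * s₁) (5 * s₂) y₁) := by
  have product_of_roots := denom_pow_four_mul_sub_four_pow_four hy₂
  have sum_of_roots := denom_pow_five_mul_discrLinearCoeff hy₂
  unfold discrZ2 hornForm
  linear_combination
    (s₁ - s₂) * (5 * s₁ + s₂) * product_of_roots + y₁ * sum_of_roots

end CommRing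

theorem horn_parametrization_Z2_phase_general {K : Type*} [Field K] (s₁ s₂ : K)
    (h₁ : s₁ ≠ s₂) (h₂ : 5 * s₁ + s₂ ≠ 0) :
    discrZ2 (-(16 * s₁ ^ 4 * (s₁ - s₂)) / (5 * s₁ + s₂) ^ 5)
      (-(4 * s₂ ^ 2) / ((s₁ - s₂) * (5 * s₁ + s₂))) = 0 := by
  have hden : (s₁ - s₂) * (5 * s₁ + s₂) ≠ 0 := mul_ne_zero (sub_ne_zero.mpr h₁) h₂
  have hroot : hornForm s₁ s₂ (-(16 * s₁ ^ 4 * (s₁ - s₂)) / (5 * s₁ + s₂) ^ 5) = 0 := by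
    rw [hornForm, mul_div_cancel₀ _ (pow_ne_zero 5 h₂), neg_add_cancel]
  refine (mul_eq_zero_iff_left (pow_ne_zero 5 hden)).mp ?_
  rw [denom_pow_five_mul_discrZ2_eq_neg_hornForm_mul _ (mul_div_cancel₀ _ hden),
    hroot, zero_mul, neg_zero]

/-- The Horn parametrization associated to the charge matrix
`Q = [[2,1,2,−5,0],[0,−1,0,−1,2]]` lands on the discriminant `Δ̃ = 0`. -/
theorem horn_parametrization_Z2_phase (s₁ s₂ : ℂ)
    (h₁ : s₁ ≠ s₂) (h₂ : 5 * s₁ + s₂ ≠ 0) :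
    Δtilde (-(16 * s₁ ^ 4 * (s₁ - s₂)) / (5 * s₁ + s₂) ^ 5)
           (-(4 * s₂ ^ 2) / ((s₁ - s₂) * (5 * s₁ + s₂))) = 0 :=
  horn_parametrization_Z2_phase_general s₁ s₂ h₁ h₂
end

section
/- Let R be the localization of the polynomial ring ℂ[x,y] at the powers of y. The ℂ-subalgebra of R generated by the three elements y⁻¹, x²·y, and x is isomorphic as a ℂ-algebra to the quotient ℂ[u,v,w]/(u·v − w²), via the map sending u ↦ y⁻¹, v ↦ x²·y, w ↦ x. -/
open MvPolynomial

/-- The polynomial ring `ℂ[x,y]`. -/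
noncomputable abbrev PolyXY : Type := MvPolynomial (Fin 2) ℂ

/-- The localization `R` of `ℂ[x,y]` at the powers of `y`. -/
noncomputable abbrev LocAwayY : Type := Localization.Away (X 1 : PolyXY)

/-- The image of `x` in the localization. -/
noncomputable def xElem : LocAwayY := algebraMap PolyXY LocAwayY (X 0)

/-- The image of `y` in the localization. -/
noncomputable def yElem : LocAwayY := algebraMap PolyXY LocAwayY (X 1)

/-- The element `y⁻¹` of the localization. -/
noncomputable def yInv : LocAwayY := IsLocalization.Away.invSelf (X 1 : PolyXY)

/-!
Let `B = R[u, v, w] / (uv - wⁿ)` and consider `B → R[x, y, y⁻¹]`, `u ↦ y⁻¹`, `v ↦ xⁿy`, `w ↦ x`.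
Following it by the map `R[x, y, y⁻¹] → B[u⁻¹]`, `x ↦ w`, `y ↦ u⁻¹`, gives the localization map
`B → B[u⁻¹]`, which is injective because `u` is a nonzerodivisor of `B`. Hence the first map is
injective, and its image is the subalgebra generated by the images of `u`, `v` and `w`.
-/

theorem mk_mem_nonZeroDivisors_of_isRegular {A : Type*} [CommRing A] {a b : A} (c : A)
    (ha : IsRegular a) (hb : ∀ g, a ∣ b * g → a ∣ g) :
    Ideal.Quotient.mk (Ideal.span {a * c - b}) a ∈ nonZeroDivisors _ := by
  rw [mem_nonZeroDivisors_iff_right]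
  intro z hz
  obtain ⟨p, rfl⟩ := Ideal.Quotient.mk_surjective z
  rw [← map_mul, Ideal.Quotient.eq_zero_iff_dvd] at hz
  obtain ⟨g, hg⟩ := hz
  obtain ⟨k, rfl⟩ : a ∣ g := hb g ⟨c * g - p, by linear_combination hg⟩
  rw [Ideal.Quotient.eq_zero_iff_dvd]
  exact ⟨k, ha.left (by linear_combination hg)⟩

theorem X_dvd_of_X_dvd_monomial_mul {σ R : Type*} [CommSemiring R] {i : σ} {e : σ →₀ ℕ}
    (he : e i = 0) {p : MvPolynomial σ R} (h : X i ∣ monomial e 1 * p) : X i ∣ p := by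
  rw [X_dvd_iff_modMonomial_eq_zero] at h ⊢
  ext m
  by_cases hm : Finsupp.single i 1 ≤ m
  · exact coeff_modMonomial_of_le _ hm
  · have hem : ¬ Finsupp.single i 1 ≤ e + m := by
      simpa [Finsupp.single_le_iff, he] using hm
    have hcoeff := congrArg (coeff (e + m)) h
    rw [coeff_modMonomial_of_not_le _ hem, coeff_monomial_mul, one_mul] at hcoeff
    rwa [coeff_modMonomial_of_not_le _ hm]

/-- The coordinate ring `R[u, v, w] / (uv - wⁿ)` of the surface singularity of type `A_{n-1}`
(for `n ≥ 2`), with `u`, `v`, `w` encoded as the variables `0`, `1`, `2`. -/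
abbrev TypeASingularity (R : Type*) [CommRing R] (n : ℕ) : Type _ :=
  MvPolynomial (Fin 3) R ⧸ Ideal.span {(X 0 * X 1 - X 2 ^ n : MvPolynomial (Fin 3) R)}

namespace TypeASingularity

variable {R : Type*} [CommRing R] {n : ℕ}

/-- The coordinate functions `u`, `v`, `w` on the surface `uv = wⁿ`. -/
noncomputable def coord (i : Fin 3) : TypeASingularity R n :=
  Ideal.Quotient.mk _ (X i)

theorem coord_zero_mul_coord_one :
    (coord 0 * coord 1 : TypeASingularity R n) = coord 2 ^ n :=
  Ideal.Quotient.eq.2 (Ideal.mem_span_singleton_self _)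

theorem coord_zero_mem_nonZeroDivisors :
    (coord 0 : TypeASingularity R n) ∈ nonZeroDivisors _ := by
  refine mk_mem_nonZeroDivisors_of_isRegular (X 1) isRegular_X fun g hg ↦ ?_
  rw [X_pow_eq_monomial] at hg
  exact X_dvd_of_X_dvd_monomial_mul (Finsupp.single_eq_of_ne (by decide)) hg

section Lift

variable {A : Type*} [CommRing A] [Algebra R A]

theorem algHom_ext {f g : TypeASingularity R n →ₐ[R] A} (h : ∀ i, f (coord i) = g (coord i)) :
    f = g :=
  Ideal.Quotient.algHom_ext R (MvPolynomial.algHom_ext h)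

/-- The universal property of `R[u, v, w] / (uv - wⁿ)`: the algebra map sending the coordinates to
a point `p` of `A³` that lies on the surface. -/
noncomputable def lift (p : Fin 3 → A) (hp : p 0 * p 1 = p 2 ^ n) :
    TypeASingularity R n →ₐ[R] A :=
  Ideal.Quotient.liftₐ _ (aeval p) fun q hq ↦ by
    obtain ⟨g, rfl⟩ := Ideal.mem_span_singleton.1 hq
    simp [hp]

@[simp]
theorem lift_coord (p : Fin 3 → A) (hp : p 0 * p 1 = p 2 ^ n) (i : Fin 3) :
    lift (R := R) p hp (coord i) = p i :=
  aeval_X p i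

theorem range_lift (p : Fin 3 → A) (hp : p 0 * p 1 = p 2 ^ n) :
    (lift (R := R) p hp).range = Algebra.adjoin R (Set.range p) := by
  have hcomp : (lift (R := R) p hp).comp (Ideal.Quotient.mkₐ R _) = aeval p :=
    Ideal.Quotient.liftₐ_comp ..
  rw [Algebra.adjoin_range_eq_range_aeval, ← hcomp, AlgHom.range_comp,
    (AlgHom.range_eq_top _).2 (Ideal.Quotient.mkₐ_surjective R _), Algebra.map_top]

end Lift

section Chart

variable (R n) (S : Type*) [CommRing S] [Algebra (MvPolynomial (Fin 2) R) S]
  [IsLocalization.Away (X 1 : MvPolynomial (Fin 2) R) S]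

/-- The point `(y⁻¹, xⁿy, x)` of the surface `uv = wⁿ`, with values in any localization `S` of
`R[x, y]` away from `y`. -/
noncomputable def awayPoint : Fin 3 → S :=
  ![IsLocalization.Away.invSelf (X 1 : MvPolynomial (Fin 2) R),
    algebraMap (MvPolynomial (Fin 2) R) S (X 0) ^ n * algebraMap (MvPolynomial (Fin 2) R) S (X 1),
    algebraMap (MvPolynomial (Fin 2) R) S (X 0)]

theorem awayPoint_zero_mul_awayPoint_one :
    awayPoint R n S 0 * awayPoint R n S 1 = awayPoint R n S 2 ^ n := by
  simp only [awayPoint, Matrix.cons_val]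
  linear_combination algebraMap (MvPolynomial (Fin 2) R) S (X 0) ^ n *
    IsLocalization.Away.mul_invSelf (S := S) (X 1 : MvPolynomial (Fin 2) R)

theorem range_awayPoint :
    Set.range (awayPoint R n S) =
      {IsLocalization.Away.invSelf (X 1 : MvPolynomial (Fin 2) R),
        algebraMap (MvPolynomial (Fin 2) R) S (X 0) ^ n *
          algebraMap (MvPolynomial (Fin 2) R) S (X 1),
        algebraMap (MvPolynomial (Fin 2) R) S (X 0)} := by
  simp only [awayPoint, Matrix.range_cons, Matrix.range_empty, Set.union_empty,
    Set.singleton_union]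

variable [Algebra R S] [IsScalarTower R (MvPolynomial (Fin 2) R) S]

/-- The map `R[u, v, w] / (uv - wⁿ) → R[x, y, y⁻¹]`, `u ↦ y⁻¹`, `v ↦ xⁿy`, `w ↦ x`. -/
noncomputable def toAway : TypeASingularity R n →ₐ[R] S :=
  lift (awayPoint R n S) (awayPoint_zero_mul_awayPoint_one R n S)

/-- The ring `R[u, v, w, u⁻¹] / (uv - wⁿ)` of functions on the chart `u ≠ 0`. -/
abbrev Chart : Type _ := Localization.Away (coord 0 : TypeASingularity R n)

theorem coord_two_pow_mul_invSelf :
    algebraMap (TypeASingularity R n) (Chart R n) (coord 2) ^ n *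
        IsLocalization.Away.invSelf (coord 0 : TypeASingularity R n) =
      algebraMap (TypeASingularity R n) (Chart R n) (coord 1) := by
  rw [← map_pow, ← coord_zero_mul_coord_one, map_mul, mul_right_comm,
    IsLocalization.Away.mul_invSelf, one_mul]

/-- The map `R[x, y, y⁻¹] → R[u, v, w, u⁻¹] / (uv - wⁿ)`, `x ↦ w`, `y ↦ u⁻¹`. -/
noncomputable def awayToChart : S →ₐ[R] Chart R n :=
  IsLocalization.Away.liftAlgHom (X 1 : MvPolynomial (Fin 2) R)
    (f := aeval ![algebraMap (TypeASingularity R n) (Chart R n) (coord 2),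
      IsLocalization.Away.invSelf (coord 0 : TypeASingularity R n)]) <| by
    simpa using IsUnit.of_mul_eq_one_right _
      (IsLocalization.Away.mul_invSelf (coord 0 : TypeASingularity R n))

theorem awayToChart_algebraMap (q : MvPolynomial (Fin 2) R) :
    awayToChart R n S (algebraMap (MvPolynomial (Fin 2) R) S q) =
      aeval ![algebraMap (TypeASingularity R n) (Chart R n) (coord 2),
        IsLocalization.Away.invSelf (coord 0 : TypeASingularity R n)] q := by
  rw [awayToChart, IsLocalization.Away.liftAlgHom_apply, IsLocalization.Away.lift_eq]
  rfl

theorem awayToChart_invSelf :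
    awayToChart R n S (IsLocalization.Away.invSelf (X 1 : MvPolynomial (Fin 2) R)) =
      algebraMap (TypeASingularity R n) (Chart R n) (coord 0) := by
  have hy := congrArg (awayToChart R n S)
    (IsLocalization.Away.mul_invSelf (S := S) (X 1 : MvPolynomial (Fin 2) R))
  rw [map_mul, map_one, awayToChart_algebraMap, aeval_X] at hy
  exact (left_inv_eq_right_inv (IsLocalization.Away.mul_invSelf _) hy).symm

theorem awayToChart_comp_toAway :
    (awayToChart R n S).comp (toAway R n S) =
      IsScalarTower.toAlgHom R (TypeASingularity R n) (Chart R n) := by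
  refine algHom_ext fun i ↦ ?_
  fin_cases i
  · simp [toAway, awayPoint, awayToChart_invSelf]
  · simp [toAway, awayPoint, awayToChart_algebraMap, coord_two_pow_mul_invSelf]
  · simp [toAway, awayPoint, awayToChart_algebraMap]

theorem toAway_injective : Function.Injective (toAway R n S) := by
  have hloc : Function.Injective (algebraMap (TypeASingularity R n) (Chart R n)) :=
    IsLocalization.injective _ (Submonoid.powers_le.2 coord_zero_mem_nonZeroDivisors)
  refine Function.Injective.of_comp (f := awayToChart R n S) ?_
  rwa [← AlgHom.coe_comp, awayToChart_comp_toAway, IsScalarTower.coe_toAlgHom']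

end Chart

end TypeASingularity

open TypeASingularity in
theorem Z2_point_is_A1_singularity_general (R : Type*) [CommRing R] (n : ℕ) (S : Type*)
    [CommRing S] [Algebra R S] [Algebra (MvPolynomial (Fin 2) R) S]
    [IsScalarTower R (MvPolynomial (Fin 2) R) S]
    [IsLocalization.Away (X 1 : MvPolynomial (Fin 2) R) S] :
    let x : S := algebraMap (MvPolynomial (Fin 2) R) S (X 0)
    let y : S := algebraMap (MvPolynomial (Fin 2) R) S (X 1)
    let yInv : S := IsLocalization.Away.invSelf (X 1 : MvPolynomial (Fin 2) R)
    ∃ e : TypeASingularity R n ≃ₐ[R] Algebra.adjoin R ({yInv, x ^ n * y, x} : Set S),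
      (e (Ideal.Quotient.mk _ (X 0)) : S) = yInv ∧
      (e (Ideal.Quotient.mk _ (X 1)) : S) = x ^ n * y ∧
      (e (Ideal.Quotient.mk _ (X 2)) : S) = x := by
  intro x y yInv
  have hrange : (toAway R n S).range =
      Algebra.adjoin R ({yInv, x ^ n * y, x} : Set S) := by
    rw [toAway, range_lift, range_awayPoint]
  let e := (AlgEquiv.ofInjective _ (toAway_injective R n S)).trans
    (Subalgebra.equivOfEq _ _ hrange)
  have he (i : Fin 3) : (e (coord i) : S) = awayPoint R n S i :=
    lift_coord _ (awayPoint_zero_mul_awayPoint_one R n S) i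
  exact ⟨e, he 0, he 1, he 2⟩

/-- The moduli space of the `ℂ³/ℤ₅` model near the `ℤ₂` orbifold point:
the `ℂ`-subalgebra of the localization of `ℂ[x,y]` at the powers of `y` generated by
`y⁻¹`, `x²y` and `x` is isomorphic, as a `ℂ`-algebra, to `ℂ[u,v,w]/(uv − w²)`,
via `u ↦ y⁻¹`, `v ↦ x²y`, `w ↦ x`. -/
theorem Z2_point_is_A1_singularity :
    ∃ e : (MvPolynomial (Fin 3) ℂ ⧸
            Ideal.span {(X 0 * X 1 - X 2 ^ 2 : MvPolynomial (Fin 3) ℂ)}) ≃ₐ[ℂ]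
          (Algebra.adjoin ℂ ({yInv, xElem ^ 2 * yElem, xElem} : Set LocAwayY)),
      ((e (Ideal.Quotient.mk _ (X 0)) : LocAwayY) = yInv) ∧
      ((e (Ideal.Quotient.mk _ (X 1)) : LocAwayY) = xElem ^ 2 * yElem) ∧
      ((e (Ideal.Quotient.mk _ (X 2)) : LocAwayY) = xElem) :=
  Z2_point_is_A1_singularity_general ℂ 2 LocAwayY
end

section
/- Let n ≥ 1 and let a : Fin n → ℕ satisfy aᵢ ≥ 1 for all i, and set m = Σᵢ aᵢ. Writing a_I = Σ_{i∈I} aᵢ for I ⊆ Fin n, the following identity of integers holds: Σ_{I ⊆ Fin n} (−1)^{#I} · ( Σ_{l = 0}^{m−1} (if a_I ≤ l then l − a_I else 0) ) = Σ_{I ⊆ Fin n, 0 ∉ I} (−1)^{#I} · ( Σ_{l = m − a₀}^{m−1} (l − a_I) ), where a₀ = a(0). (Note that a_I ≤ m − a₀ ≤ l for every I with 0 ∉ I and every l in the right-hand range.) -/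
open Finset

/-!
Pair each subset `I` not containing `i` with `insert i I`, which has the opposite sign. Substituting
`k = l - a_I` turns the sum over `l` into a sum over `0 ≤ k < m - a_I`. Adjoining `i` shortens this
range by `a i`, so in the difference only the top `a i` values of `k` survive, that is
`m - a i ≤ l < m`.
-/

theorem sum_powerset_insert_neg_one_pow_card_smul {ι G : Type*} [DecidableEq ι] [AddCommGroup G]
    {s : Finset ι} {i : ι} (hi : i ∉ s) (F : Finset ι → G) :
    ∑ I ∈ (insert i s).powerset, (-1 : ℤ) ^ #I • F I =
      ∑ I ∈ s.powerset, (-1 : ℤ) ^ #I • (F I - F (insert i I)) := by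
  rw [sum_powerset_insert hi, ← sum_add_distrib]
  refine sum_congr rfl fun I hI => ?_
  have hiI : i ∉ I := notMem_of_mem_powerset_of_notMem hI hi
  rw [card_insert_of_notMem hiI, pow_succ, mul_neg_one, neg_smul, smul_sub, sub_eq_add_neg]

theorem sum_neg_one_pow_card_smul_eq_sum_notMem {ι G : Type*} [Fintype ι] [DecidableEq ι]
    [AddCommGroup G] (i : ι) (F : Finset ι → G) :
    ∑ I, (-1 : ℤ) ^ #I • F I = ∑ I with i ∉ I, (-1 : ℤ) ^ #I • (F I - F (insert i I)) := by
  have powerset_erase : (univ.erase i).powerset = ({I | i ∉ I} : Finset (Finset ι)) := by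
    ext I
    simp [subset_erase]
  rw [← powerset_erase, ← sum_powerset_insert_neg_one_pow_card_smul (notMem_erase i univ),
    insert_erase (mem_univ i), powerset_univ]

section ShiftedSums

variable {G : Type*} (f : ℤ → G)

theorem sum_Ico_intCast_sub [AddCommMonoid G] {s p : ℕ} (hsp : s ≤ p) (q : ℕ) :
    ∑ l ∈ Ico p q, f (l - s) = ∑ k ∈ Ico (p - s) (q - s), f k := by
  have le_of_mem {l : ℕ} (hl : l ∈ Ico p q) : s ≤ l := hsp.trans (mem_Ico.1 hl).1
  rw [← Nat.image_sub_const_Ico hsp,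
    sum_image fun _ hk _ hl => tsub_inj_left (le_of_mem hk) (le_of_mem hl)]
  exact sum_congr rfl fun l hl => by rw [Nat.cast_sub (le_of_mem hl)]

theorem sum_range_ite_le_intCast_sub [AddCommMonoid G] (m s : ℕ) :
    ∑ l ∈ range m, (if s ≤ l then f (l - s) else 0) = ∑ k ∈ range (m - s), f k := by
  rw [← sum_filter, range_eq_Ico, Ico_filter_le, Nat.zero_max, sum_Ico_intCast_sub f le_rfl,
    Nat.sub_self, range_eq_Ico]

theorem sum_range_ite_le_sub_sum_range_ite_add_le [AddCommGroup G] {m s c : ℕ} (h : c + s ≤ m) :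
    ∑ l ∈ range m, (if s ≤ l then f (l - s) else 0) -
        ∑ l ∈ range m, (if c + s ≤ l then f (l - (c + s : ℕ)) else 0) =
      ∑ l ∈ Ico (m - c) m, f (l - s) := by
  rw [sum_range_ite_le_intCast_sub, sum_range_ite_le_intCast_sub,
    sum_Ico_intCast_sub f (Nat.le_sub_of_add_le' h), Nat.sub_sub,
    sum_Ico_eq_sub _ (Nat.sub_le_sub_left (Nat.le_add_left s c) m)]

end ShiftedSums

/-- Taking `f k` to be the class of `𝒪(k)` gives the cancellation in K-theory itself, of which
`f k = k` is the first Chern coefficient. -/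
theorem koszul_cancellation_general {ι G : Type*} [Fintype ι] [DecidableEq ι] [AddCommGroup G]
    (i : ι) (a : ι → ℕ) {m : ℕ} (hm : ∑ j, a j ≤ m) (f : ℤ → G) :
    ∑ I : Finset ι, (-1 : ℤ) ^ #I •
        ∑ l ∈ range m, (if ∑ j ∈ I, a j ≤ l then f (l - (∑ j ∈ I, a j : ℕ)) else 0) =
      ∑ I with i ∉ I, (-1 : ℤ) ^ #I •
        ∑ l ∈ Ico (m - a i) m, f (l - (∑ j ∈ I, a j : ℕ)) := by
  rw [sum_neg_one_pow_card_smul_eq_sum_notMem i]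
  refine sum_congr rfl fun I hI => ?_
  have sum_insert_I : ∑ j ∈ insert i I, a j = a i + ∑ j ∈ I, a j :=
    sum_insert ((mem_filter_univ I).1 hI)
  have weight_le : a i + ∑ j ∈ I, a j ≤ m :=
    sum_insert_I ▸ (sum_le_univ_sum_of_nonneg fun _ => Nat.zero_le _).trans hm
  rw [sum_insert_I, sum_range_ite_le_sub_sum_range_ite_add_le f weight_le]

/-- Combinatorial cancellation in the K-theory lemma for the dual exceptional
collection on `𝐏ⁿ⁻¹(a₁,…,aₙ)`: with `m = Σ aᵢ`, the alternating sum over all pairs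
`(l, I)` with `a_I ≤ l < m` of `l − a_I` reduces to the sum over subsets `I` not
containing the first index and `m − a₀ ≤ l < m`. -/
theorem koszul_cancellation {n : ℕ} (hn : 0 < n) (a : Fin n → ℕ)
    (ha : ∀ i, 1 ≤ a i) (m : ℕ) (hm : m = ∑ i, a i) :
    (∑ I : Finset (Fin n), (-1 : ℤ) ^ I.card *
        ∑ l ∈ Finset.range m,
          (if (∑ i ∈ I, a i) ≤ l then (l : ℤ) - (∑ i ∈ I, a i : ℕ) else 0)) =
    ∑ I ∈ Finset.univ.filter (fun I : Finset (Fin n) => (⟨0, hn⟩ : Fin n) ∉ I),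
        (-1 : ℤ) ^ I.card *
        ∑ l ∈ Finset.Ico (m - a ⟨0, hn⟩) m, ((l : ℤ) - (∑ i ∈ I, a i : ℕ)) := by
  simpa only [smul_eq_mul, id] using koszul_cancellation_general (⟨0, hn⟩ : Fin n) a hm.ge id
end
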